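/- Let R = ℤ[√3], M = R[X]/(X³), m the multiplication map and Δ the comultiplication. For an element c ∈ M, the R-linear endomorphism 'multiplication by c' satisfies (multiplication by c)² = m ∘ Δ if and only if c² = 3·x², and this holds if and only if there exists h₂ ∈ R such that c = √3·x + h₂·x² or c = −√3·x + h₂·x². In particular, up to the sign of the coefficient of x and an arbitrary x²-coefficient, multiplication by √3·x is the unique M-module endomorphism h of M with h² = m ∘ Δ. -/

import Mathlib

open TensorProduct Polynomial

noncomputable section

/-- `R3` is the ring `ℤ[√3]`. -/
abbrev R3 : Type := Zsqrtd 3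

/-- `M3` is the quotient ring `R3[X]/(X³)`. -/
abbrev M3 : Type := Polynomial R3 ⧸ Ideal.span {(Polynomial.X : Polynomial R3) ^ 3}

/-- `x3` is the image of `X` in `M3`. -/
def x3 : M3 := Ideal.Quotient.mk _ Polynomial.X


lemma mk_smul3 (r : R3) (p : Polynomial R3) :
    r • (Ideal.Quotient.mk (Ideal.span {(Polynomial.X : Polynomial R3) ^ 3}) p) =
      Ideal.Quotient.mk _ (Polynomial.C r * p) := by
  rw [← Polynomial.smul_eq_C_mul]; rfl

lemma smul3 (r : R3) (y : M3) : r • y = algebraMap R3 M3 r * y := Algebra.smul_def r y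

lemma x3_cube : x3 ^ 3 = 0 := by
  unfold x3
  rw [← map_pow, Ideal.Quotient.eq_zero_iff_mem]
  exact Ideal.mem_span_singleton_self _

lemma M3_ind (a b d : R3) (h : a • (1 : M3) + b • x3 + d • x3 ^ 2 = 0) :
    a = 0 ∧ b = 0 ∧ d = 0 := by
  unfold x3 at h
  rw [← map_pow, ← map_one (Ideal.Quotient.mk _), mk_smul3, mk_smul3, mk_smul3, ← map_add,
    ← map_add, Ideal.Quotient.eq_zero_iff_mem, Ideal.mem_span_singleton,
    Polynomial.X_pow_dvd_iff] at h
  have h0 := h 0 (by norm_num)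
  have h1 := h 1 (by norm_num)
  have h2 := h 2 (by norm_num)
  simp [Polynomial.coeff_X, Polynomial.coeff_X_pow] at h0 h1 h2
  exact ⟨h0, h1, h2⟩

lemma M3_span (c : M3) : ∃ a b d : R3, c = a • (1 : M3) + b • x3 + d • x3 ^ 2 := by
  obtain ⟨p, rfl⟩ := Ideal.Quotient.mk_surjective c
  refine ⟨p.coeff 0, p.coeff 1, p.coeff 2, ?_⟩
  unfold x3
  rw [← map_pow, ← map_one (Ideal.Quotient.mk _), mk_smul3, mk_smul3, mk_smul3, ← map_add,
    ← map_add, Ideal.Quotient.eq, Ideal.mem_span_singleton, Polynomial.X_pow_dvd_iff]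
  intro n hn
  interval_cases n <;>
    simp [Polynomial.coeff_X, Polynomial.coeff_X_pow]

lemma R3_mul_zero (a b : R3) (h : a * b = 0) : a = 0 ∨ b = 0 := by
  have : Zsqrtd.Nonsquare 3 := ⟨fun n hn => by
    have : n < 2 := by nlinarith
    interval_cases n <;> omega⟩
  exact Zsqrtd.eq_zero_or_eq_zero_of_mul_eq_zero (d := 3) h

lemma sqrtd_sq3 : (Zsqrtd.sqrtd : R3) * Zsqrtd.sqrtd = 3 := by
  rw [Zsqrtd.dmuld]; rfl

theorem stmt6
    (Δ : M3 →ₗ[R3] M3 ⊗[R3] M3)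
    (hΔ1 : Δ 1 = 1 ⊗ₜ[R3] (x3 ^ 2) + x3 ⊗ₜ[R3] x3 + (x3 ^ 2) ⊗ₜ[R3] 1)
    (hΔx : Δ x3 = x3 ⊗ₜ[R3] (x3 ^ 2) + (x3 ^ 2) ⊗ₜ[R3] x3)
    (hΔx2 : Δ (x3 ^ 2) = (x3 ^ 2) ⊗ₜ[R3] (x3 ^ 2))
    (c : M3) :
    (LinearMap.mulLeft R3 c ∘ₗ LinearMap.mulLeft R3 c = LinearMap.mul' R3 M3 ∘ₗ Δ ↔
      c ^ 2 = 3 * x3 ^ 2) ∧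
    (c ^ 2 = 3 * x3 ^ 2 ↔
      ∃ h₂ : R3, c = (Zsqrtd.sqrtd : R3) • x3 + h₂ • x3 ^ 2 ∨
        c = -((Zsqrtd.sqrtd : R3) • x3) + h₂ • x3 ^ 2) := by
  have hx := x3_cube
  have key : ∀ y, LinearMap.mul' R3 M3 (Δ y) = 3 * x3 ^ 2 * y := by
    intro y
    obtain ⟨a, b, d, rfl⟩ := M3_span y
    simp only [map_add, map_smul, hΔ1, hΔx, hΔx2, LinearMap.mul'_apply]
    simp only [smul3]
    linear_combination (-(algebraMap R3 M3 b) - 2 * algebraMap R3 M3 d * x3) * hx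
  refine ⟨⟨fun h => ?_, fun h => ?_⟩, ⟨fun h => ?_, ?_⟩⟩
  · have := LinearMap.congr_fun h 1
    simp only [LinearMap.comp_apply, key, LinearMap.mulLeft_apply] at this
    linear_combination this
  · refine LinearMap.ext fun y => ?_
    simp only [LinearMap.comp_apply, key, LinearMap.mulLeft_apply]
    linear_combination y * h
  · obtain ⟨a, b, d, rfl⟩ := M3_span c
    have h' := M3_ind (a * a) (2 * a * b) (2 * a * d + b * b - 3) (by
      simp only [smul3, map_mul, map_add, map_sub, map_ofNat] at h ⊢
      linear_combination h - (2 * algebraMap R3 M3 b * algebraMap R3 M3 d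
        + algebraMap R3 M3 d ^ 2 * x3) * hx)
    obtain ⟨h0, -, h2⟩ := h'
    have ha : a = 0 := by rcases R3_mul_zero _ _ h0 with h | h <;> exact h
    subst ha
    have hb := R3_mul_zero (b - Zsqrtd.sqrtd) (b + Zsqrtd.sqrtd)
      (by linear_combination h2 - sqrtd_sq3)
    refine ⟨d, hb.imp (fun h => ?_) (fun h => ?_)⟩
    · rw [sub_eq_zero.mp h, zero_smul, zero_add]
    · rw [eq_neg_of_add_eq_zero_left h, zero_smul, zero_add, neg_smul]
  · have hs : algebraMap R3 M3 Zsqrtd.sqrtd * algebraMap R3 M3 Zsqrtd.sqrtd = 3 := by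
      rw [← map_mul, sqrtd_sq3, map_ofNat]
    rintro ⟨d, rfl | rfl⟩
    · simp only [smul3]
      linear_combination x3 ^ 2 * hs + (2 * algebraMap R3 M3 Zsqrtd.sqrtd * algebraMap R3 M3 d
        + algebraMap R3 M3 d ^ 2 * x3) * hx
    · simp only [smul3]
      linear_combination x3 ^ 2 * hs + (-2 * algebraMap R3 M3 Zsqrtd.sqrtd * algebraMap R3 M3 d
        + algebraMap R3 M3 d ^ 2 * x3) * hx
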